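/- Let n ≥ 1, m > n, let p : ℝ^n → [1,∞) be a measurable exponent, and let r ∈ P^log(ℝ^n) be a measurable exponent with r_∞ = r⁻ ≤ p⁻. Define ψ(t) = (1/r⁻)(1 − r⁻/p⁺) for 0 < t ≤ 1 and ψ(t) = (1/r⁺)(1 − r⁻/p⁻) for t > 1 (with the convention 1/p⁺ = 0 if p⁺ = ∞). Then there exists a constant C > 0 such that for every t > 0 and every f ∈ L^{r(·)}(ℝ^n), ‖η_{t,m} * f‖_{L^{p(·)}(ℝ^n)} ≤ C t^{−nψ(t)} ‖f‖_{L^{r(·)}(ℝ^n)}. -/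

import Mathlib

open MeasureTheory Filter Real
open scoped ENNReal

noncomputable section

/-- Euclidean space `ℝⁿ`. -/
abbrev Esp (n : ℕ) := EuclideanSpace ℝ (Fin n)

/-- The variable exponent modular `ρ_{p(·)}(f) = ∫_{ℝⁿ} |f(x)|^{p(x)} dx`. -/
def vMod (n : ℕ) (p : Esp n → ℝ) (f : Esp n → ℝ) : ℝ≥0∞ :=
  ∫⁻ x, (ENNReal.ofReal |f x|) ^ (p x) ∂volume

/-- The Luxemburg norm `‖f‖_{L^{p(·)}} = inf {λ > 0 : ρ_{p(·)}(f/λ) ≤ 1}`. -/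
def luxNorm (n : ℕ) (p : Esp n → ℝ) (f : Esp n → ℝ) : ℝ :=
  sInf {lam : ℝ | 0 < lam ∧ vMod n p (fun x => f x / lam) ≤ 1}

/-- Membership in the variable exponent Lebesgue space `L^{p(·)}(ℝⁿ)`. -/
def MemVLp (n : ℕ) (p : Esp n → ℝ) (f : Esp n → ℝ) : Prop :=
  AEMeasurable f volume ∧ ∃ lam : ℝ, 0 < lam ∧ vMod n p (fun x => f x / lam) ≤ 1

/-- Global log-Hölder continuity of `1/p` with decay value `l` (representing `l = 1/p_∞`). -/
def IsLogHolder (n : ℕ) (p : Esp n → ℝ) (l : ℝ) : Prop :=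
  ∃ c : ℝ, 0 < c ∧
    (∀ x y : Esp n, |1 / p x - 1 / p y| ≤ c / Real.log (Real.exp 1 + 1 / ‖x - y‖)) ∧
    (∀ x : Esp n, |1 / p x - l| ≤ c / Real.log (Real.exp 1 + ‖x‖))

/-- The kernel `η_{t,m}(x) = t^{-n} (1 + |x|/t)^{-m}`. -/
def etaKer (n : ℕ) (t m : ℝ) (x : Esp n) : ℝ :=
  t ^ (-(n : ℝ)) * (1 + ‖x‖ / t) ^ (-m)

/-- Convolution `(u * v)(x) = ∫ u(x - y) v(y) dy`. -/
def convR (n : ℕ) (u v : Esp n → ℝ) (x : Esp n) : ℝ :=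
  ∫ y, u (x - y) * v y ∂volume

lemma ptwise (a q r c L N : ℝ) (ha : 0 ≤ a) (hq : 1 ≤ q) (hqr : q ≤ r) (hL : 1 < L)
    (hc : 0 < c) (hN : 0 < N) (h : 1 / q - 1 / r ≤ c / Real.log L) :
    a ^ q ≤ Real.exp (2 * N * q ^ 2 * c) * a ^ r + Real.exp (2 * q * c * N) * L ^ (-N) := by
  have hlog : 0 < Real.log L := Real.log_pos hL
  have hq0 : 0 < q := by linarith
  have hr0 : 0 < r := by linarith
  have hL0 : 0 < L := by linarith
  have h1 : 0 ≤ a ^ r := Real.rpow_nonneg ha r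
  have h2 : 0 < L ^ (-N) := Real.rpow_pos_of_pos hL0 _
  have e1 : 1 ≤ Real.exp (2 * N * q ^ 2 * c) := Real.one_le_exp (by positivity)
  have e2 : 1 ≤ Real.exp (2 * q * c * N) := Real.one_le_exp (by positivity)
  have hkey : (r - q) * Real.log L ≤ r * q * c := by
    have : (1 / q - 1 / r) * Real.log L ≤ c := by
      rwa [le_div_iff₀ hlog] at h
    have e : (r - q) * Real.log L = r * q * ((1 / q - 1 / r) * Real.log L) := by
      field_simp
    rw [e]
    exact mul_le_mul_of_nonneg_left this (by positivity)
  have hLe : L ^ (-N) = Real.exp (- (N * Real.log L)) := by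
    rw [Real.rpow_def_of_pos hL0]; ring_nf
  rcases le_or_gt 1 a with h1a | h1a
  · have : a ^ q ≤ a ^ r := Real.rpow_le_rpow_of_exponent_le h1a hqr
    nlinarith
  rcases lt_or_ge a (L ^ (-N)) with hlt | hge
  · have : a ^ q ≤ a := by
      simpa using Real.rpow_le_rpow_of_exponent_ge' ha h1a.le zero_le_one hq
    nlinarith
  rcases le_or_gt r (2 * q) with hr2 | hr2
  · have ha0 : 0 < a := lt_of_lt_of_le h2 hge
    have : a ^ q ≤ Real.exp (2 * N * q ^ 2 * c) * a ^ r := by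
      rw [Real.rpow_def_of_pos ha0, Real.rpow_def_of_pos ha0, ← Real.exp_add]
      apply Real.exp_le_exp.mpr
      have hla : - (N * Real.log L) ≤ Real.log a := by
        rw [hLe] at hge
        exact (Real.le_log_iff_exp_le ha0).mpr hge
      have h3 : (r - q) * (- Real.log a) ≤ (r - q) * (N * Real.log L) :=
        mul_le_mul_of_nonneg_left (by linarith) (by linarith)
      have h4 : N * ((r - q) * Real.log L) ≤ N * (2 * q * q * c) := by
        apply mul_le_mul_of_nonneg_left _ hN.le
        refine hkey.trans ?_
        gcongr
      nlinarith
    have : 0 ≤ Real.exp (2 * q * c * N) * L ^ (-N) := by positivity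
    linarith
  · have hll : Real.log L ≤ 2 * q * c := by
      have : r / 2 * Real.log L ≤ (r - q) * Real.log L :=
        mul_le_mul_of_nonneg_right (by linarith) hlog.le
      have h5 : r * (Real.log L) ≤ r * (2 * q * c) := by nlinarith
      exact le_of_mul_le_mul_left h5 hr0
    have h6 : a ^ q ≤ 1 := Real.rpow_le_one ha h1a.le hq0.le
    have h7 : 1 ≤ Real.exp (2 * q * c * N) * L ^ (-N) := by
      rw [hLe, ← Real.exp_add]
      apply Real.one_le_exp
      nlinarith
    have : 0 ≤ Real.exp (2 * N * q ^ 2 * c) * a ^ r := by positivity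
    linarith

lemma stepB (n : ℕ) (r : Esp n → ℝ) (q : ℝ) (hq : 1 ≤ q) (hqr : ∀ᵐ x, q ≤ r x)
    (hlog : IsLogHolder n r (1 / q)) :
    ∃ K : ℝ≥0∞, K ≠ ∞ ∧ ∀ f : Esp n → ℝ, vMod n r f ≤ 1 →
      ∫⁻ x, (ENNReal.ofReal |f x|) ^ q ≤ K := by
  obtain ⟨c, hc, -, h⟩ := hlog
  set N : ℝ := n + 1 with hN
  have hN0 : 0 < N := by positivity
  set K1 := Real.exp (2 * N * q ^ 2 * c)
  set K2 := Real.exp (2 * q * c * N)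
  have hint : Integrable (fun x : Esp n => (1 + ‖x‖) ^ (-N)) volume := by
    apply integrable_one_add_norm
    simp [hN]
  refine ⟨ENNReal.ofReal K1 * 1 + ENNReal.ofReal K2 *
    ∫⁻ x : Esp n, ENNReal.ofReal ((1 + ‖x‖) ^ (-N)), ?_, ?_⟩
  · apply ENNReal.add_ne_top.mpr ⟨by simp, ENNReal.mul_ne_top (by simp) ?_⟩
    exact hint.lintegral_lt_top.ne
  intro f hf
  have hm2 : Measurable (fun x : Esp n => ENNReal.ofReal K2 * ENNReal.ofReal ((1 + ‖x‖) ^ (-N))) := by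
    fun_prop
  calc ∫⁻ x, (ENNReal.ofReal |f x|) ^ q
      ≤ ∫⁻ x, (ENNReal.ofReal K1 * (ENNReal.ofReal |f x|) ^ (r x) +
          ENNReal.ofReal K2 * ENNReal.ofReal ((1 + ‖x‖) ^ (-N))) := by
        apply lintegral_mono_ae
        filter_upwards [hqr] with x hx
        have hq0 : 0 ≤ q := by linarith
        have hL : 1 < Real.exp 1 + ‖x‖ := by
          have := Real.exp_one_gt_d9
          have := norm_nonneg x
          linarith
        have := ptwise |f x| q (r x) c (Real.exp 1 + ‖x‖) N (abs_nonneg _) hq hx hL hc hN0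
          (by have := h x; rw [abs_sub_comm] at this; exact (le_abs_self _).trans this)
        rw [ENNReal.ofReal_rpow_of_nonneg (abs_nonneg _) hq0,
          ENNReal.ofReal_rpow_of_nonneg (abs_nonneg _) (by linarith),
          ← ENNReal.ofReal_mul (by positivity), ← ENNReal.ofReal_mul (by positivity),
          ← ENNReal.ofReal_add (by positivity) (by positivity)]
        apply ENNReal.ofReal_le_ofReal
        refine this.trans ?_
        have h8 : (Real.exp 1 + ‖x‖) ^ (-N) ≤ (1 + ‖x‖) ^ (-N) := by
          apply Real.rpow_le_rpow_of_nonpos (by positivity) _ (by linarith)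
          have := Real.exp_one_gt_d9
          linarith
        gcongr
    _ = ENNReal.ofReal K1 * vMod n r f + ENNReal.ofReal K2 *
          ∫⁻ x : Esp n, ENNReal.ofReal ((1 + ‖x‖) ^ (-N)) := by
        rw [lintegral_add_right _ hm2, lintegral_const_mul' _ _ (by simp),
          lintegral_const_mul' _ _ (by simp)]
        rfl
    _ ≤ _ := by gcongr

lemma etaKer_nonneg (n : ℕ) (t m : ℝ) (ht : 0 < t) (x : Esp n) : 0 ≤ etaKer n t m x := by
  unfold etaKer; positivity

lemma etaKer_le (n : ℕ) (t m : ℝ) (ht : 0 < t) (hm : 0 ≤ m) (x : Esp n) :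
    etaKer n t m x ≤ t ^ (-(n : ℝ)) := by
  unfold etaKer
  have h : (1 + ‖x‖ / t) ^ (-m) ≤ 1 := by
    apply Real.rpow_le_one_of_one_le_of_nonpos _ (by linarith)
    have : 0 ≤ ‖x‖ / t := by positivity
    linarith
  have h2 : 0 ≤ t ^ (-(n : ℝ)) := by positivity
  nlinarith

lemma etaKer_meas (n : ℕ) (t m : ℝ) : Measurable (etaKer n t m) := by
  unfold etaKer; fun_prop

lemma etaKer_lint (n : ℕ) (m : ℝ) (hm : (n : ℝ) < m) :
    ∃ A : ℝ≥0∞, A ≠ ∞ ∧ ∀ t : ℝ, 0 < t →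
      ∫⁻ x, ENNReal.ofReal (etaKer n t m x) = A := by
  have hint : Integrable (fun x : Esp n => (1 + ‖x‖) ^ (-m)) volume := by
    apply integrable_one_add_norm
    simpa using hm
  refine ⟨ENNReal.ofReal (∫ x : Esp n, (1 + ‖x‖) ^ (-m)), by simp, ?_⟩
  intro t ht
  have heq : etaKer n t m = fun x => t ^ (-(n : ℝ)) * (fun x : Esp n => (1 + ‖x‖) ^ (-m)) (t⁻¹ • x) := by
    funext x
    simp only [etaKer, norm_smul, norm_inv, Real.norm_eq_abs, abs_of_pos ht]
    rw [div_eq_inv_mul]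
  have hint2 : Integrable (etaKer n t m) volume := by
    rw [heq]
    exact (hint.comp_smul (inv_ne_zero ht.ne')).const_mul _
  rw [← ofReal_integral_eq_lintegral_ofReal hint2
    (Eventually.of_forall fun x => etaKer_nonneg n t m ht x)]
  congr 1
  rw [heq, integral_const_mul,
    Measure.integral_comp_inv_smul_of_nonneg volume (fun x : Esp n => (1 + ‖x‖) ^ (-m)) ht.le]
  simp only [finrank_euclideanSpace, Fintype.card_fin, smul_eq_mul]
  rw [← mul_assoc, Real.rpow_neg ht.le, Real.rpow_natCast, inv_mul_cancel₀ (by positivity), one_mul]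

lemma jensen (n : ℕ) (t m q : ℝ) (ht : 0 < t) (hq : 1 ≤ q) (A : ℝ≥0∞)
    (hA : ∫⁻ x, ENNReal.ofReal (etaKer n t m x) = A)
    (f : Esp n → ℝ) (hf : AEMeasurable f volume) (x : Esp n) :
    (ENNReal.ofReal |convR n (etaKer n t m) f x|) ^ q ≤
      A ^ (q - 1) * ∫⁻ y, ENNReal.ofReal (etaKer n t m (x - y)) * (ENNReal.ofReal |f y|) ^ q := by
  have hq0 : 0 < q := by linarith
  set E : Esp n → ℝ≥0∞ := fun y => ENNReal.ofReal (etaKer n t m (x - y)) with hE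
  have hEm : Measurable E := by
    apply ENNReal.measurable_ofReal.comp
    exact (etaKer_meas n t m).comp (measurable_const.sub measurable_id)
  set ν := (volume : Measure (Esp n)).withDensity E with hν
  have hac : ν ≪ volume := withDensity_absolutelyContinuous _ _
  have hνu : ν Set.univ = A := by
    rw [hν, withDensity_apply _ MeasurableSet.univ, Measure.restrict_univ, hE, ← hA]
    exact lintegral_sub_left_eq_self (fun z => ENNReal.ofReal (etaKer n t m z)) x
  have hfm : AEMeasurable f ν := hf.mono_ac hac
  have hJ := eLpNorm'_le_eLpNorm'_mul_rpow_measure_univ (μ := ν) (f := f) one_pos hq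
    hfm.aestronglyMeasurable
  have h1 : ENNReal.ofReal |convR n (etaKer n t m) f x| ≤ eLpNorm' f 1 ν := by
    rw [← Real.enorm_eq_ofReal_abs]
    unfold convR
    refine (enorm_integral_le_lintegral_enorm _).trans ?_
    simp only [eLpNorm', ENNReal.rpow_one, div_one]
    rw [hν, lintegral_withDensity_eq_lintegral_mul₀ hEm.aemeasurable hf.enorm]
    apply lintegral_mono
    intro y
    simp only [enorm_mul, Pi.mul_apply, hE]
    rw [Real.enorm_of_nonneg (etaKer_nonneg n t m ht _)]
  have h2 : eLpNorm' f q ν ^ q = ∫⁻ y, E y * (ENNReal.ofReal |f y|) ^ q := by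
    simp only [eLpNorm']
    rw [← ENNReal.rpow_mul, one_div, inv_mul_cancel₀ hq0.ne', ENNReal.rpow_one, hν,
      lintegral_withDensity_eq_lintegral_mul₀ hEm.aemeasurable (hf.enorm.pow_const q)]
    simp only [Pi.mul_apply, Real.enorm_eq_ofReal_abs]
  calc _ ≤ (eLpNorm' f q ν * ν Set.univ ^ (1 / 1 - 1 / q)) ^ q := by
        gcongr
        exact h1.trans hJ
    _ = _ := by
        rw [ENNReal.mul_rpow_of_nonneg _ _ hq0.le, h2, hνu, ← ENNReal.rpow_mul, mul_comm]
        congr 2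
        field_simp

lemma young (n : ℕ) (t m q : ℝ) (A : ℝ≥0∞)
    (hA : ∫⁻ x, ENNReal.ofReal (etaKer n t m x) = A)
    (f : Esp n → ℝ) (hf : AEMeasurable f volume) :
    ∫⁻ x, ∫⁻ y, ENNReal.ofReal (etaKer n t m (x - y)) * (ENNReal.ofReal |f y|) ^ q =
      A * ∫⁻ y, (ENNReal.ofReal |f y|) ^ q := by
  have hF : AEMeasurable (fun y => (ENNReal.ofReal |f y|) ^ q) volume := by fun_prop
  rw [lintegral_lintegral_swap]
  · rw [← lintegral_const_mul'' _ hF]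
    congr 1
    funext y
    rw [lintegral_mul_const]
    · rw [← hA]
      congr 1
      exact lintegral_sub_right_eq_self (fun z => ENNReal.ofReal (etaKer n t m z)) y
    · exact ENNReal.measurable_ofReal.comp
        ((etaKer_meas n t m).comp (measurable_id.sub measurable_const))
  · apply AEMeasurable.mul
    · apply Measurable.aemeasurable
      exact ENNReal.measurable_ofReal.comp
        ((etaKer_meas n t m).comp (measurable_fst.sub measurable_snd))
    · exact hF.comp_snd

/-- combined bound -/
lemma stepC (n : ℕ) (m : ℝ) (hm : (n : ℝ) < m) (r : Esp n → ℝ) (q : ℝ) (hq : 1 ≤ q)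
    (hqr : ∀ᵐ x, q ≤ r x) (hlog : IsLogHolder n r (1 / q)) :
    ∃ B : ℝ, 1 ≤ B ∧ ∀ t : ℝ, 0 < t → ∀ f : Esp n → ℝ, AEMeasurable f volume →
      vMod n r f ≤ 1 →
      (∀ x, |convR n (etaKer n t m) f x| ^ q ≤ B * t ^ (-(n : ℝ))) ∧
      ∫⁻ x, ENNReal.ofReal (|convR n (etaKer n t m) f x| ^ q) ≤ ENNReal.ofReal B := by
  obtain ⟨K, hK, hKb⟩ := stepB n r q hq hqr hlog
  obtain ⟨A, hAt, hA⟩ := etaKer_lint n m hm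
  have hq0 : 0 < q := by linarith
  have hm0 : 0 ≤ m := le_trans (Nat.cast_nonneg n) hm.le
  have hAq : A ^ (q - 1) ≠ ∞ := ENNReal.rpow_ne_top_of_nonneg (by linarith) hAt
  set B : ℝ≥0∞ := 1 + A ^ (q - 1) * K + A ^ (q - 1) * (A * K) with hB
  have hBt : B ≠ ∞ := by
    rw [hB]
    finiteness
  refine ⟨B.toReal, ?_, ?_⟩
  · rw [← ENNReal.toReal_one]
    apply (ENNReal.toReal_le_toReal (by simp) hBt).mpr
    rw [hB, add_assoc]
    exact le_self_add
  intro t ht f hf hmod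
  have hfK := hKb f hmod
  have hJ := jensen n t m q ht hq A (hA t ht) f hf
  constructor
  · intro x
    have h1 : ENNReal.ofReal (|convR n (etaKer n t m) f x| ^ q) ≤
        ENNReal.ofReal (B.toReal * t ^ (-(n : ℝ))) := by
      rw [← ENNReal.ofReal_rpow_of_nonneg (abs_nonneg _) hq0.le,
        ENNReal.ofReal_mul ENNReal.toReal_nonneg, ENNReal.ofReal_toReal hBt]
      refine (hJ x).trans ?_
      calc A ^ (q - 1) * ∫⁻ y, ENNReal.ofReal (etaKer n t m (x - y)) * (ENNReal.ofReal |f y|) ^ q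
          ≤ A ^ (q - 1) * ∫⁻ y, ENNReal.ofReal (t ^ (-(n : ℝ))) * (ENNReal.ofReal |f y|) ^ q := by
            gcongr
            exact etaKer_le n t m ht hm0 _
        _ = A ^ (q - 1) * (ENNReal.ofReal (t ^ (-(n : ℝ))) * ∫⁻ y, (ENNReal.ofReal |f y|) ^ q) := by
            rw [lintegral_const_mul' _ _ (by simp)]
        _ ≤ A ^ (q - 1) * (ENNReal.ofReal (t ^ (-(n : ℝ))) * K) := by gcongr
        _ = (A ^ (q - 1) * K) * ENNReal.ofReal (t ^ (-(n : ℝ))) := by ring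
        _ ≤ B * ENNReal.ofReal (t ^ (-(n : ℝ))) := by
            gcongr
            rw [hB]
            exact le_add_right le_add_self
    have hB0 : 0 ≤ B.toReal := ENNReal.toReal_nonneg
    exact (ENNReal.ofReal_le_ofReal_iff (by positivity)).mp h1
  · rw [ENNReal.ofReal_toReal hBt]
    calc ∫⁻ x, ENNReal.ofReal (|convR n (etaKer n t m) f x| ^ q)
        ≤ ∫⁻ x, A ^ (q - 1) *
          ∫⁻ y, ENNReal.ofReal (etaKer n t m (x - y)) * (ENNReal.ofReal |f y|) ^ q := by
          apply lintegral_mono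
          intro x
          simp only
          rw [← ENNReal.ofReal_rpow_of_nonneg (abs_nonneg _) hq0.le]
          exact hJ x
      _ = A ^ (q - 1) * (A * ∫⁻ y, (ENNReal.ofReal |f y|) ^ q) := by
          rw [lintegral_const_mul' _ _ hAq, young n t m q A (hA t ht) f hf]
      _ ≤ A ^ (q - 1) * (A * K) := by gcongr
      _ ≤ B := by rw [hB]; exact le_add_self

/-- final modular estimate -/
lemma stepD (n : ℕ) (p : Esp n → ℝ) (q B t s : ℝ) (hq : 1 ≤ q) (hB : 1 ≤ B) (ht : 0 < t)
    (hpq : ∀ᵐ x, q ≤ p x) (g : Esp n → ℝ)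
    (h1 : ∀ x, |g x| ^ q ≤ B * t ^ (-(n : ℝ)))
    (h2 : ∫⁻ x, ENNReal.ofReal (|g x| ^ q) ≤ ENNReal.ofReal B)
    (hs : ∀ᵐ x, (t ^ (-(n : ℝ) * (1 / q - s))) ^ (p x) ≤ t ^ (-(n : ℝ))) :
    vMod n p (fun x => g x / (B * t ^ (-(n : ℝ) * s))) ≤ 1 := by
  have hq0 : 0 < q := by linarith
  have hB0 : 0 < B := by linarith
  set M : ℝ := B * t ^ (-(n : ℝ) / q) with hM
  have hM0 : 0 < M := by positivity
  have hBq : B ≤ B ^ q := by simpa using Real.rpow_le_rpow_of_exponent_le hB hq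
  have hMq : M ^ q = B ^ q * t ^ (-(n : ℝ)) := by
    rw [hM, Real.mul_rpow hB0.le (by positivity), ← Real.rpow_mul ht.le, div_mul_cancel₀ _ hq0.ne']
  have hgM : ∀ x, |g x| / M ≤ 1 := by
    intro x
    rw [div_le_one hM0]
    apply (Real.rpow_le_rpow_iff (abs_nonneg _) hM0.le hq0).mp
    rw [hMq]
    refine (h1 x).trans ?_
    gcongr
  unfold vMod
  calc ∫⁻ x, ENNReal.ofReal |g x / (B * t ^ (-(n : ℝ) * s))| ^ p x
      ≤ ∫⁻ x, ENNReal.ofReal B⁻¹ * ENNReal.ofReal (|g x| ^ q) := by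
        apply lintegral_mono_ae
        filter_upwards [hpq, hs] with x hx hsx
        rw [ENNReal.ofReal_rpow_of_nonneg (abs_nonneg _) (by linarith),
          ← ENNReal.ofReal_mul (by positivity)]
        apply ENNReal.ofReal_le_ofReal
        have e1 : |g x / (B * t ^ (-(n : ℝ) * s))| =
            (|g x| / M) * t ^ (-(n : ℝ) * (1 / q - s)) := by
          have : -(n : ℝ) * (1 / q - s) = -(n : ℝ) / q - (-(n : ℝ) * s) := by ring
          rw [this, Real.rpow_sub ht, abs_div, abs_of_pos (by positivity : 0 < B * t ^ (-(n : ℝ) * s)), hM]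
          have := Real.rpow_pos_of_pos ht (-(n : ℝ) / q)
          field_simp
        rw [e1, Real.mul_rpow (by positivity) (by positivity)]
        calc (|g x| / M) ^ p x * (t ^ (-(n : ℝ) * (1 / q - s))) ^ p x
            ≤ (|g x| / M) ^ q * t ^ (-(n : ℝ)) := by
              refine mul_le_mul ?_ hsx (by positivity) (by positivity)
              exact Real.rpow_le_rpow_of_exponent_ge' (by positivity) (hgM x) hq0.le hx
          _ = (B ^ q)⁻¹ * |g x| ^ q := by
              rw [Real.div_rpow (abs_nonneg _) hM0.le, hMq]
              have := Real.rpow_pos_of_pos ht (-(n : ℝ))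
              field_simp
          _ ≤ B⁻¹ * |g x| ^ q := by gcongr
    _ = ENNReal.ofReal B⁻¹ * ∫⁻ x, ENNReal.ofReal (|g x| ^ q) :=
        lintegral_const_mul' _ _ (by simp)
    _ ≤ ENNReal.ofReal B⁻¹ * ENNReal.ofReal B := by gcongr
    _ = 1 := by
        rw [← ENNReal.ofReal_mul (by positivity), inv_mul_cancel₀ hB0.ne', ENNReal.ofReal_one]

/-- Theorem 3.17(2) of the paper: for a measurable exponent `p` and `r ∈ P^log` with
`r_∞ = r⁻ ≤ p⁻`, `‖η_{t,m} * f‖_{L^{p(·)}} ≤ C t^{-nψ(t)} ‖f‖_{L^{r(·)}}`, where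
`ψ(t) = (1/r⁻)(1 - r⁻/p⁺)` for `0 < t ≤ 1` and `ψ(t) = (1/r⁺)(1 - r⁻/p⁻)` for `t > 1`
(conventions `1/p⁺ = 0` if `p⁺ = ∞` etc. match Lean's `essSup = 0` for essentially
unbounded real-valued exponents together with `x/0 = 0`). -/
theorem statement14 (n : ℕ) (hn : 1 ≤ n) (m : ℝ) (hm : (n : ℝ) < m)
    (pexp : Esp n → ℝ) (hpmeas : Measurable pexp) (hp1 : ∀ x, 1 ≤ pexp x)
    (r : Esp n → ℝ) (hrmeas : Measurable r) (hr1 : ∀ x, 1 ≤ r x)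
    (pm pp rm rp : ℝ)
    (hpm : pm = essInf pexp volume) (hpp : pp = essSup pexp volume)
    (hrm : rm = essInf r volume) (hrp : rp = essSup r volume)
    (hrlog : IsLogHolder n r (1 / rm))
    (hrmpm : rm ≤ pm) :
    ∃ C : ℝ, 0 < C ∧ ∀ t : ℝ, 0 < t → ∀ f : Esp n → ℝ,
      MemVLp n r f →
      luxNorm n pexp (convR n (etaKer n t m) f) ≤
        C * t ^ (-(n : ℝ) *
          (if t ≤ 1 then (1 / rm) * (1 - rm / pp) else (1 / rp) * (1 - rm / pm))) *
        luxNorm n r f := by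
  have hrb : IsBoundedUnder (· ≥ ·) (ae (volume : Measure (Esp n))) r :=
    isBoundedUnder_of ⟨1, hr1⟩
  have hpb : IsBoundedUnder (· ≥ ·) (ae (volume : Measure (Esp n))) pexp :=
    isBoundedUnder_of ⟨1, hp1⟩
  have hrge : ∀ᵐ x, rm ≤ r x := by rw [hrm]; exact ae_essInf_le hrb
  have hpge : ∀ᵐ x, pm ≤ pexp x := by rw [hpm]; exact ae_essInf_le hpb
  have hrm1 : 1 ≤ rm := by
    rw [hrm, essInf_eq_sSup]
    apply le_csSup
    · by_contra hub
      have hall : ∀ k : ℕ, ∀ᵐ x, (k : ℝ) ≤ r x := by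
        intro k
        have := not_bddAbove_iff.mp hub k
        obtain ⟨a, ha, hka⟩ := this
        have ha' : ∀ᵐ x, ¬ (r x < a) := by
          rw [ae_iff]; simpa using ha
        filter_upwards [ha'] with x hx
        linarith [not_lt.mp hx]
      have hall' := ae_all_iff.mpr hall
      obtain ⟨x, hx⟩ := hall'.exists
      obtain ⟨k, hk⟩ := exists_nat_gt (r x)
      linarith [hx k]
    · have : {x : Esp n | r x < 1} = ∅ := by
        ext x; simpa using hr1 x
      simp [this]
  have hpm1 : 1 ≤ pm := hrm1.trans hrmpm
  have hrm0 : 0 < rm := by linarith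
  have hpm0 : 0 < pm := by linarith
  have hpq : ∀ᵐ x, rm ≤ pexp x := hpge.mono fun x hx => hrmpm.trans hx
  obtain ⟨B, hB, hmain⟩ := stepC n m hm r rm hrm1 hrge hrlog
  have hB0 : 0 < B := by linarith
  have hn0 : (0 : ℝ) ≤ n := Nat.cast_nonneg n
  -- essSup facts
  have hrp' : 1 / rp ≤ 1 / rm := by
    by_cases hb : IsBoundedUnder (· ≤ ·) (ae (volume : Measure (Esp n))) r
    · have : ∀ᵐ x, r x ≤ rp := by rw [hrp]; exact ae_le_essSup hb
      obtain ⟨x, hx1, hx2⟩ := (this.and hrge).exists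
      exact one_div_le_one_div_of_le hrm0 (hx2.trans hx1)
    · have : rp = 0 := by
        rw [hrp]
        simp only [essSup, limsup, limsSup]
        have he : {a : ℝ | ∀ᶠ x in map r (ae (volume : Measure (Esp n))), x ≤ a} = ∅ := by
          ext a
          simp only [Set.mem_ofPred_eq, Set.mem_empty_iff_false, iff_false]
          intro h
          exact hb ⟨a, h⟩
        rw [he, Real.sInf_empty]
      rw [this]; simp [hrm0.le]
  have hpp' : ∀ᵐ x, pexp x * (1 / pp) ≤ 1 := by
    by_cases hb : IsBoundedUnder (· ≤ ·) (ae (volume : Measure (Esp n))) pexp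
    · have : ∀ᵐ x, pexp x ≤ pp := by rw [hpp]; exact ae_le_essSup hb
      filter_upwards [this] with x hx
      have := hp1 x
      rw [mul_one_div, div_le_one (by linarith)]
      exact hx
    · have : pp = 0 := by
        rw [hpp]
        simp only [essSup, limsup, limsSup]
        have he : {a : ℝ | ∀ᶠ x in map pexp (ae (volume : Measure (Esp n))), x ≤ a} = ∅ := by
          ext a
          simp only [Set.mem_ofPred_eq, Set.mem_empty_iff_false, iff_false]
          intro h
          exact hb ⟨a, h⟩
        rw [he, Real.sInf_empty]
      rw [this]; simp
  refine ⟨B, hB0, ?_⟩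
  intro t ht f hf
  obtain ⟨hfm, lam0, hlam0, hlam0'⟩ := hf
  set s : ℝ := if t ≤ 1 then (1 / rm) * (1 - rm / pp) else (1 / rp) * (1 - rm / pm) with hs
  have hsx : ∀ᵐ x, (t ^ (-(n : ℝ) * (1 / rm - s))) ^ (pexp x) ≤ t ^ (-(n : ℝ)) := by
    by_cases h1 : t ≤ 1
    · have e : 1 / rm - s = 1 / pp := by
        rw [hs, if_pos h1]
        field_simp
        ring
      filter_upwards [hpp'] with x hx
      rw [← Real.rpow_mul ht.le, e]
      apply Real.rpow_le_rpow_of_exponent_ge ht h1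
      have := mul_le_mul_of_nonneg_left hx hn0
      linarith
    · have e : 1 / pm ≤ 1 / rm - s := by
        rw [hs, if_neg h1]
        have h3 : 0 ≤ 1 - rm / pm := by
          rw [sub_nonneg, div_le_one hpm0]; exact hrmpm
        have h4 := mul_le_mul_of_nonneg_right hrp' h3
        have h5 : 1 / rm * (1 - rm / pm) = 1 / rm - 1 / pm := by
          field_simp
        linarith
      filter_upwards [hpge] with x hx
      rw [← Real.rpow_mul ht.le]
      apply Real.rpow_le_rpow_of_exponent_le (not_le.mp h1).le
      have h6 : 1 ≤ (1 / rm - s) * pexp x := by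
        calc (1 : ℝ) = 1 / pm * pm := by field_simp
          _ ≤ (1 / rm - s) * pexp x := by
            apply mul_le_mul e hx hpm0.le
            exact le_trans (by positivity) e
      have := mul_le_mul_of_nonneg_left h6 hn0
      linarith
  have hts : 0 < t ^ (-(n : ℝ) * s) := Real.rpow_pos_of_pos ht _
  have hkey : ∀ lam : ℝ, 0 < lam → vMod n r (fun x => f x / lam) ≤ 1 →
      luxNorm n pexp (convR n (etaKer n t m) f) ≤ B * t ^ (-(n : ℝ) * s) * lam := by
    intro lam hlam hl
    obtain ⟨g1, g2⟩ := hmain t ht (fun x => f x / lam) (hfm.div_const lam) hl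
    have hD := stepD n pexp rm B t s hrm1 hB ht hpq _ g1 g2 hsx
    apply csInf_le
    · exact ⟨0, fun a ha => ha.1.le⟩
    · refine ⟨by positivity, ?_⟩
      convert hD using 2
      funext x
      have : convR n (etaKer n t m) (fun x => f x / lam) x = convR n (etaKer n t m) f x / lam := by
        unfold convR
        rw [← integral_div]
        congr 1
        funext y
        ring
      rw [this, div_div]
      congr 1
      ring
  have hC : 0 < B * t ^ (-(n : ℝ) * s) := by positivity
  rw [← div_le_iff₀' hC]
  unfold luxNorm at hkey ⊢
  refine le_csInf ⟨lam0, hlam0, hlam0'⟩ ?_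
  rintro lam ⟨hl1, hl2⟩
  rw [div_le_iff₀' hC]
  exact hkey lam hl1 hl2
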